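/- arXiv:0907.3409 — 5 statements merged into one kernel-verified Lean document; each statement's English description precedes it below -/
import Mathlib

section
/- (Arithmetic partition lemma.) For every dimension d ≥ 1 there exists a constant C₀ = C₀(d) with the following property: for every (large) number B ≥ 1 there is a partition {π_α} of ℤ^d such that diam π_α < B^{C₀} for every α, and such that whenever j ∈ π_α and j′ ∈ π_{α′} with α ≠ α′, one has |j − j′| + |j² − j′²| > B, where j² = |j|² = j·j. -/
open scoped BigOperators Pointwise
open MeasureTheory

noncomputable section

namespace NLS


/-- Euclidean distance on `ℤ^d`. -/
def eudistZ {d : ℕ} (x y : Fin d → ℤ) : ℝ :=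
  Real.sqrt (∑ i, ((x i : ℝ) - (y i : ℝ)) ^ 2)

/-!
The pieces are the connected components of the graph joining `x ≠ y` when
`|x - y| + ||x|² - |y|²| ≤ B`, so everything rests on bounding the length `k` of an injective path
in this graph by a power of `B`. This goes by induction on the dimension `g` of the span `V` of the
differences of the path. By induction, a stretch of the path whose differences span less than `V`
is short, so all stretches of a suitable length `L`, polynomial in `B`, span `V`. Within such a
stretch `⟪x, y - x⟫ = (|y|² - |x|² - |y - x|²) / 2` is polynomially bounded, and since a nonzero
Gram determinant of integral vectors is at least `1`, Cramer's rule gives `|⟪x, w⟫| ≤ M |w|` for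
all `w ∈ V`, with `M` polynomial in `B`. This holds for every point `x` of the path, and taking `w`
to be a difference of two of its points shows that the path has diameter at most `2 M`. Only
polynomially many integral points fit in a ball of that radius.
-/

section Matrix

open Matrix

variable {n R : Type*} [Fintype n] [CommRing R] [LinearOrder R] [IsStrictOrderedRing R]

lemma abs_dotProduct_le {v w : n → R} {a b : R} (hv : ∀ i, |v i| ≤ a) (hw : ∀ i, |w i| ≤ b) :
    |v ⬝ᵥ w| ≤ Fintype.card n * (a * b) := by
  refine (Finset.abs_sum_le_sum_abs _ _).trans ?_
  rw [← nsmul_eq_mul]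
  refine Finset.sum_le_card_nsmul _ _ _ fun i _ ↦ ?_
  rw [abs_mul]
  exact mul_le_mul (hv i) (hw i) (abs_nonneg _) ((abs_nonneg _).trans (hv i))

variable [DecidableEq n]

lemma abs_adjugate_apply_le {M : Matrix n n R} {a : R} (ha : 1 ≤ a) (hM : ∀ i j, |M i j| ≤ a)
    (i j : n) : |M.adjugate i j| ≤ (Fintype.card n).factorial * a ^ Fintype.card n := by
  have hentry (r s : n) : |M.updateRow j (Pi.single i 1) r s| ≤ a := by
    by_cases hr : r = j
    · subst hr
      by_cases hs : s = i
      · subst hs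
        simpa using ha
      · simpa [hs] using zero_le_one.trans ha
    · simpa [hr] using hM r s
  rw [adjugate_apply, ← nsmul_eq_mul]
  exact det_le (abv := AbsoluteValue.abs) hentry

lemma one_le_abs_det_of_mem_range_intCast {M : Matrix n n R}
    (hM : ∀ i j, M i j ∈ (Int.castAddHom R).range) (hdet : M.det ≠ 0) : 1 ≤ |M.det| := by
  choose Z hZ using hM
  have hdetZ : M.det = ((of Z).det : ℤ) := by
    have hMZ : M = (Int.castRingHom R).mapMatrix (of Z) := by
      ext i j
      exact (hZ i j).symm
    rw [hMZ, ← RingHom.map_det]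
    rfl
  rw [hdetZ] at hdet ⊢
  exact_mod_cast Int.one_le_abs (Int.cast_ne_zero.1 hdet)

end Matrix

section InnerProductSpace

open Matrix Module
open scoped RealInnerProductSpace

variable {E : Type*} [NormedAddCommGroup E] [InnerProductSpace ℝ E]

/-- The constant in the bound, provided by Cramer's rule, of a linear functional `⟪x, ·⟫` on the
span of `g` integral vectors of norm at most `A` in terms of its values, of size at most `A ^ 2`,
on these vectors. -/
def cramerBound (g : ℕ) (A : ℝ) : ℝ :=
  g ^ 2 * g.factorial * A ^ (2 * g + 3)

lemma cramerBound_nonneg (g : ℕ) {A : ℝ} (hA : 0 ≤ A) : 0 ≤ cramerBound g A := by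
  rw [cramerBound]
  positivity

lemma eq_zero_of_mem_span_range_of_inner_eq_zero {ι : Type*} {v : ι → E} {w : E}
    (hw : w ∈ Submodule.span ℝ (Set.range v)) (hvw : ∀ s, ⟪w, v s⟫ = 0) : w = 0 := by
  have hle : Submodule.span ℝ (Set.range v) ≤ (innerₛₗ ℝ w).ker :=
    Submodule.span_le.2 (Set.range_subset_iff.2 hvw)
  exact inner_self_eq_zero.1 (hle hw)

section Gram

variable {ι : Type*} [Fintype ι] [DecidableEq ι]

lemma det_gram_mul_inner_sum_smul (v : ι → E) (c : ι → ℝ) (x : E) :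
    (gram ℝ v).det * ⟪x, ∑ s, c s • v s⟫ =
      ((gram ℝ v).adjugate *ᵥ fun s ↦ ⟪v s, ∑ t, c t • v t⟫) ⬝ᵥ fun s ↦ ⟪x, v s⟫ := by
  have hgram : (fun s ↦ ⟪v s, ∑ t, c t • v t⟫) = gram ℝ v *ᵥ c := by
    ext s
    simp [mulVec, dotProduct, inner_sum, inner_smul_right, mul_comm]
  rw [hgram, mulVec_mulVec, adjugate_mul, smul_mulVec, one_mulVec, smul_dotProduct, smul_eq_mul]
  simp [dotProduct, inner_sum, inner_smul_right]

lemma abs_inner_le_cramerBound_mul_norm {v : ι → E} {A : ℝ} (hA : 1 ≤ A)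
    (hdet : 1 ≤ |(gram ℝ v).det|) (hv : ∀ s, ‖v s‖ ≤ A) {x w : E} (hx : ∀ s, |⟪x, v s⟫| ≤ A ^ 2)
    (hw : w ∈ Submodule.span ℝ (Set.range v)) :
    |⟪x, w⟫| ≤ cramerBound (Fintype.card ι) A * ‖w‖ := by
  obtain ⟨c, rfl⟩ := (Submodule.mem_span_range_iff_exists_fun ℝ).1 hw
  set w := ∑ s, c s • v s
  have hgram (s t : ι) : |gram ℝ v s t| ≤ A ^ 2 := by
    rw [gram_apply, sq]
    exact (abs_real_inner_le_norm _ _).trans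
      (mul_le_mul (hv s) (hv t) (norm_nonneg _) (by positivity))
  have hvw (s : ι) : |⟪v s, w⟫| ≤ A * ‖w‖ :=
    (abs_real_inner_le_norm _ _).trans (by gcongr; exact hv s)
  have hadj := abs_adjugate_apply_le (one_le_pow₀ hA) hgram
  calc |⟪x, w⟫| ≤ |(gram ℝ v).det| * |⟪x, w⟫| := le_mul_of_one_le_left (abs_nonneg _) hdet
    _ = |((gram ℝ v).adjugate *ᵥ fun s ↦ ⟪v s, w⟫) ⬝ᵥ fun s ↦ ⟪x, v s⟫| := by
      rw [← abs_mul, det_gram_mul_inner_sum_smul]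
    _ ≤ _ := abs_dotProduct_le (fun s ↦ abs_dotProduct_le (hadj s) hvw) hx
    _ = cramerBound (Fintype.card ι) A * ‖w‖ := by
      rw [cramerBound]
      ring

end Gram

lemma norm_sub_le_two_mul_of_abs_inner_le {x y : E} {M : ℝ} (hM : 0 ≤ M)
    (hx : |⟪x, x - y⟫| ≤ M * ‖x - y‖) (hy : |⟪y, x - y⟫| ≤ M * ‖x - y‖) : ‖x - y‖ ≤ 2 * M := by
  have hsq : ‖x - y‖ * ‖x - y‖ ≤ 2 * M * ‖x - y‖ := by
    rw [← real_inner_self_eq_norm_mul_norm, inner_sub_left]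
    linarith [(abs_le.1 hx).2, (abs_le.1 hy).1]
  rcases (norm_nonneg (x - y)).eq_or_lt with hzero | hpos
  · rw [← hzero]
    positivity
  · exact le_of_mul_le_mul_right hsq hpos

/-- All inner products between points of `S` are integers. -/
def IsIntegralSet (S : Set E) : Prop :=
  ∀ x ∈ S, ∀ y ∈ S, ⟪x, y⟫ ∈ (Int.castAddHom ℝ).range

namespace IsIntegralSet

lemma mono {S T : Set E} (hT : IsIntegralSet T) (hST : S ⊆ T) : IsIntegralSet S :=
  fun x hx y hy ↦ hT x (hST hx) y (hST hy)

lemma inner_sub_sub_mem_range {S : Set E} (hS : IsIntegralSet S) {x y p : E} (hx : x ∈ S)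
    (hy : y ∈ S) (hp : p ∈ S) : ⟪x - p, y - p⟫ ∈ (Int.castAddHom ℝ).range := by
  rw [inner_sub_left, inner_sub_right, inner_sub_right]
  exact sub_mem (sub_mem (hS x hx y hy) (hS x hx p hp)) (sub_mem (hS p hp y hy) (hS p hp p hp))

lemma exists_one_le_abs_det_gram {S : Set E} (hS : IsIntegralSet S) (hfin : S.Finite) {p : E}
    (hp : p ∈ S) :
    ∃ y : Fin (finrank ℝ (vectorSpan ℝ S)) → E, (∀ s, y s ∈ S) ∧
      Submodule.span ℝ (Set.range fun s ↦ y s - p) = vectorSpan ℝ S ∧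
      1 ≤ |(gram ℝ fun s ↦ y s - p).det| := by
  have hspan : vectorSpan ℝ S = Submodule.span ℝ ((· - p) '' S) :=
    vectorSpan_eq_span_vsub_set_right ℝ hp
  have : FiniteDimensional ℝ (Submodule.span ℝ ((· - p) '' S)) :=
    FiniteDimensional.span_of_finite ℝ (hfin.image _)
  rw [hspan]
  obtain ⟨v, hvS, hvspan, hvli⟩ := Submodule.exists_fun_fin_finrank_span_eq ℝ ((· - p) '' S)
  choose y hyS hyv using hvS
  obtain rfl : (fun s ↦ y s - p) = v := funext hyv
  exact ⟨y, hyS, hvspan, one_le_abs_det_of_mem_range_intCast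
    (fun s t ↦ hS.inner_sub_sub_mem_range (hyS s) (hyS t) hp)
    (det_gram_ne_zero_iff_linearIndependent.2 hvli)⟩

-- A point `x` of `S` is determined by the integers `⟪x - p, y - p⟫` with `y` running over `finrank`
-- many points of `S`.
lemma card_le_pow_finrank_vectorSpan {S : Finset E} (hS : IsIntegralSet (S : Set E)) {p : E}
    (hp : p ∈ S) {R : ℝ} (hR : ∀ x ∈ S, ‖x - p‖ ≤ R) :
    (S.card : ℝ) ≤ (2 * R ^ 2 + 1) ^ finrank ℝ (vectorSpan ℝ (S : Set E)) := by
  obtain ⟨y, hyS, hyspan, -⟩ := hS.exists_one_le_abs_det_gram S.finite_toSet hp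
  let code (x : E) (s : Fin (finrank ℝ (vectorSpan ℝ (S : Set E)))) : ℤ := ⌊⟪x - p, y s - p⟫⌋
  have cast_code {x : E} (hx : x ∈ S) (s) : (code x s : ℝ) = ⟪x - p, y s - p⟫ := by
    obtain ⟨z, hz⟩ := hS.inner_sub_sub_mem_range hx (hyS s) hp
    simp [code, ← hz]
  have hbox : ∀ x ∈ S, code x ∈ Fintype.piFinset fun _ ↦ Finset.Icc (-⌊R ^ 2⌋) ⌊R ^ 2⌋ := by
    intro x hx
    refine Fintype.mem_piFinset.2 fun s ↦ Finset.mem_Icc.2 (abs_le.1 (Int.le_floor.2 ?_))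
    rw [Int.cast_abs, cast_code hx, sq]
    exact (abs_real_inner_le_norm _ _).trans (mul_le_mul (hR x hx) (hR _ (hyS s)) (norm_nonneg _)
      ((norm_nonneg _).trans (hR x hx)))
  have hinj : Set.InjOn code S := by
    intro x hx x' hx' hcode
    refine sub_eq_zero.1 (eq_zero_of_mem_span_range_of_inner_eq_zero
      (hyspan ▸ vsub_mem_vectorSpan ℝ hx hx') fun s ↦ ?_)
    rw [← sub_sub_sub_cancel_right x x' p, inner_sub_left, ← cast_code hx, ← cast_code hx', hcode,
      sub_self]
  have hcard := Finset.card_le_card_of_injOn code hbox hinj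
  rw [Fintype.card_piFinset_const, Int.card_Icc] at hcard
  have hfloor : (0 : ℤ) ≤ ⌊R ^ 2⌋ := Int.floor_nonneg.2 (sq_nonneg R)
  have hside : (((⌊R ^ 2⌋ + 1 - -⌊R ^ 2⌋).toNat : ℕ) : ℝ) = 2 * (⌊R ^ 2⌋ : ℝ) + 1 := by
    rw [← Int.cast_natCast, Int.toNat_of_nonneg (by lia)]
    push_cast
    ring
  calc (S.card : ℝ) ≤ (2 * (⌊R ^ 2⌋ : ℝ) + 1) ^ finrank ℝ (vectorSpan ℝ (S : Set E)) := by
        rw [← hside]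
        exact_mod_cast hcard
    _ ≤ _ := by
      gcongr
      exact Int.floor_le _

end IsIntegralSet

lemma dist_le_mul_of_dist_succ_le {X : Type*} [PseudoMetricSpace X] {f : ℕ → X} {N : ℝ} {k : ℕ}
    (hf : ∀ i < k, dist (f i) (f (i + 1)) ≤ N) {i j : ℕ} (hi : i ≤ k) (hj : j ≤ k) :
    dist (f i) (f j) ≤ N * k := by
  wlog hij : i ≤ j generalizing i j
  · rw [dist_comm]
    exact this hj hi (le_of_not_ge hij)
  calc dist (f i) (f j) ≤ ∑ m ∈ Finset.Ico i j, dist (f m) (f (m + 1)) :=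
        dist_le_Ico_sum_dist f hij
    _ ≤ ∑ m ∈ Finset.range k, dist (f m) (f (m + 1)) :=
      Finset.sum_le_sum_of_subset_of_nonneg (fun m hm ↦ by grind) fun _ _ _ ↦ dist_nonneg
    _ ≤ (Finset.range k).card • N :=
      Finset.sum_le_card_nsmul _ _ _ fun m hm ↦ hf m (Finset.mem_range.1 hm)
    _ = N * k := by rw [Finset.card_range, nsmul_eq_mul, mul_comm]

/-- `q 0, …, q k` are distinct points with integral inner products, and each step moves the lift
`(q i, ‖q i‖ ^ 2)` to the paraboloid by at most `N` in both components. The values of `q` beyond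
`k` are irrelevant. -/
structure IsParabolicChain (N : ℝ) (q : ℕ → E) (k : ℕ) : Prop where
  isIntegralSet : IsIntegralSet (q '' Set.Iic k)
  dist_succ_le : ∀ i < k, dist (q i) (q (i + 1)) ≤ N
  dist_norm_sq_succ_le : ∀ i < k, dist (‖q i‖ ^ 2) (‖q (i + 1)‖ ^ 2) ≤ N
  injOn : Set.InjOn q (Set.Iic k)

lemma image_shift_Iic_subset {α : Type*} (q : ℕ → α) {a L k : ℕ} (h : a + L ≤ k) :
    (fun i ↦ q (a + i)) '' Set.Iic L ⊆ q '' Set.Iic k := by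
  rintro _ ⟨i, hi, rfl⟩
  exact ⟨a + i, (Nat.add_le_add_left hi a).trans h, rfl⟩

namespace IsParabolicChain

variable {N : ℝ} {q : ℕ → E} {k L : ℕ}

lemma shift (h : IsParabolicChain N q k) {a : ℕ} (ha : a + L ≤ k) :
    IsParabolicChain N (fun i ↦ q (a + i)) L where
  isIntegralSet := h.isIntegralSet.mono (image_shift_Iic_subset q ha)
  dist_succ_le i hi := h.dist_succ_le (a + i) (by lia)
  dist_norm_sq_succ_le i hi := h.dist_norm_sq_succ_le (a + i) (by lia)
  injOn i hi j hj hij := by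
    have hshift : a + i = a + j := h.injOn (by grind) (by grind) hij
    lia

lemma abs_inner_sub_le (h : IsParabolicChain N q k) (hNk : 1 ≤ N * k) {i j : ℕ} (hi : i ≤ k)
    (hj : j ≤ k) : |⟪q i, q j - q i⟫| ≤ (N * k) ^ 2 := by
  have hdist : ‖q j - q i‖ ^ 2 ≤ (N * k) ^ 2 := by
    rw [← dist_eq_norm]
    gcongr
    exact dist_le_mul_of_dist_succ_le h.dist_succ_le hj hi
  have hnorm : |‖q j‖ ^ 2 - ‖q i‖ ^ 2| ≤ N * k :=
    dist_le_mul_of_dist_succ_le h.dist_norm_sq_succ_le hj hi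
  have hpolar : 2 * ⟪q i, q j - q i⟫ = (‖q j‖ ^ 2 - ‖q i‖ ^ 2) - ‖q j - q i‖ ^ 2 := by
    rw [norm_sub_sq_real, inner_sub_right, real_inner_self_eq_norm_sq, real_inner_comm]
    ring
  have hself : N * k ≤ (N * k) ^ 2 := le_self_pow₀ hNk two_ne_zero
  rw [abs_le] at hnorm ⊢
  constructor <;> linarith [sq_nonneg ‖q j - q i‖]

lemma abs_inner_le (h : IsParabolicChain N q k) (hNk : 1 ≤ N * k) {i : ℕ} (hi : i ≤ k) {w : E}
    (hw : w ∈ vectorSpan ℝ (q '' Set.Iic k)) :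
    |⟪q i, w⟫| ≤ cramerBound (finrank ℝ (vectorSpan ℝ (q '' Set.Iic k))) (N * k) * ‖w‖ := by
  obtain ⟨y, hy, hyspan, hdet⟩ := h.isIntegralSet.exists_one_le_abs_det_gram
    ((Set.finite_Iic k).image q) (Set.mem_image_of_mem q hi)
  choose p hpk hpy using hy
  have hnorm (s) : ‖y s - q i‖ ≤ N * k := by
    rw [← hpy s, ← dist_eq_norm]
    exact dist_le_mul_of_dist_succ_le h.dist_succ_le (hpk s) hi
  have hinner (s) : |⟪q i, y s - q i⟫| ≤ (N * k) ^ 2 := by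
    rw [← hpy s]
    exact h.abs_inner_sub_le hNk hi (hpk s)
  simpa using abs_inner_le_cramerBound_mul_norm hNk hdet hnorm hinner (hyspan.symm ▸ hw)

lemma abs_inner_le_of_windows (h : IsParabolicChain N q k) (hNL : 1 ≤ N * L) (hLk : L ≤ k)
    (hspan : ∀ a, a + L ≤ k →
      vectorSpan ℝ ((fun i ↦ q (a + i)) '' Set.Iic L) = vectorSpan ℝ (q '' Set.Iic k))
    {i : ℕ} (hi : i ≤ k) {w : E} (hw : w ∈ vectorSpan ℝ (q '' Set.Iic k)) :
    |⟪q i, w⟫| ≤ cramerBound (finrank ℝ (vectorSpan ℝ (q '' Set.Iic k))) (N * L) * ‖w‖ := by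
  obtain ⟨a, j, ha, hj, rfl⟩ : ∃ a j, a + L ≤ k ∧ j ≤ L ∧ i = a + j :=
    ⟨min i (k - L), i - min i (k - L), by lia, by lia, by lia⟩
  rw [← hspan a ha] at hw ⊢
  exact (h.shift ha).abs_inner_le hNL hj hw

lemma succ_length_le_of_windows (h : IsParabolicChain N q k) (hNL : 1 ≤ N * L) (hLk : L ≤ k)
    (hspan : ∀ a, a + L ≤ k →
      vectorSpan ℝ ((fun i ↦ q (a + i)) '' Set.Iic L) = vectorSpan ℝ (q '' Set.Iic k))
    {g : ℕ} (hg : finrank ℝ (vectorSpan ℝ (q '' Set.Iic k)) = g) :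
    (k + 1 : ℝ) ≤ (2 * (2 * cramerBound g (N * L)) ^ 2 + 1) ^ g := by
  classical
  subst hg
  have hzero : q 0 ∈ q '' Set.Iic k := Set.mem_image_of_mem q (Nat.zero_le k)
  have hball (i) (hi : i ≤ k) :
      ‖q i - q 0‖ ≤ 2 * cramerBound (finrank ℝ (vectorSpan ℝ (q '' Set.Iic k))) (N * L) := by
    have hdiff : q i - q 0 ∈ vectorSpan ℝ (q '' Set.Iic k) :=
      vsub_mem_vectorSpan ℝ (Set.mem_image_of_mem q hi) hzero
    exact norm_sub_le_two_mul_of_abs_inner_le (cramerBound_nonneg _ (zero_le_one.trans hNL))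
      (h.abs_inner_le_of_windows hNL hLk hspan hi hdiff)
      (h.abs_inner_le_of_windows hNL hLk hspan (Nat.zero_le k) hdiff)
  have hcoe : ((Finset.Iic k).image q : Set E) = q '' Set.Iic k := by
    rw [Finset.coe_image, Finset.coe_Iic]
  have hcard : ((Finset.Iic k).image q).card = k + 1 := by
    rw [Finset.card_image_of_injOn (by simpa using h.injOn), Nat.card_Iic]
  have hcount := IsIntegralSet.card_le_pow_finrank_vectorSpan (hcoe ▸ h.isIntegralSet)
    (Finset.mem_image_of_mem q (Finset.mem_Iic.2 (Nat.zero_le k)))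
    (Finset.forall_mem_image.2 fun i hi ↦ hball i (Finset.mem_Iic.1 hi))
  rw [hcoe, hcard] at hcount
  exact_mod_cast hcount

lemma succ_length_le_of_le_finrank_windows (h : IsParabolicChain N q k) (hNL : 1 ≤ N * L)
    (hLk : L ≤ k) {g : ℕ} (hg : finrank ℝ (vectorSpan ℝ (q '' Set.Iic k)) ≤ g)
    (hwindow : ∀ a, a + L ≤ k →
      g ≤ finrank ℝ (vectorSpan ℝ ((fun i ↦ q (a + i)) '' Set.Iic L))) :
    (k + 1 : ℝ) ≤ (2 * (2 * cramerBound g (N * L)) ^ 2 + 1) ^ g := by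
  have : FiniteDimensional ℝ (vectorSpan ℝ (q '' Set.Iic k)) :=
    finiteDimensional_vectorSpan_of_finite ℝ ((Set.finite_Iic k).image q)
  have hspan (a) (ha : a + L ≤ k) :
      vectorSpan ℝ ((fun i ↦ q (a + i)) '' Set.Iic L) = vectorSpan ℝ (q '' Set.Iic k) :=
    Submodule.eq_of_le_of_finrank_le (vectorSpan_mono ℝ (image_shift_Iic_subset q ha))
      (hg.trans (hwindow a ha))
  have hzero : 0 + L ≤ k := by lia
  exact h.succ_length_le_of_windows hNL hLk hspan (hg.antisymm (hspan 0 hzero ▸ hwindow 0 hzero))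

lemma length_eq_zero_of_finrank_eq_zero (h : IsParabolicChain N q k)
    (hfin : finrank ℝ (vectorSpan ℝ (q '' Set.Iic k)) = 0) : k = 0 := by
  have : FiniteDimensional ℝ (vectorSpan ℝ (q '' Set.Iic k)) :=
    finiteDimensional_vectorSpan_of_finite ℝ ((Set.finite_Iic k).image q)
  have hsub : (q '' Set.Iic k).Subsingleton :=
    (vectorSpan_eq_bot_iff_subsingleton ℝ).1 (Submodule.finrank_eq_zero.1 hfin)
  exact h.injOn Set.self_mem_Iic (Nat.zero_le k)
    (hsub (Set.mem_image_of_mem q Set.self_mem_Iic) (Set.mem_image_of_mem q (Nat.zero_le k)))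

end IsParabolicChain

lemma cramerBound_count_le_mul_pow (g : ℕ) {A a N : ℝ} {f : ℕ} (hN : 1 ≤ N) (hA : 0 ≤ A)
    (hAa : A ≤ a * N ^ f) :
    (2 * (2 * cramerBound g A) ^ 2 + 1) ^ g ≤
      (2 * (2 * cramerBound g a) ^ 2 + 1) ^ g * N ^ (f * (2 * g + 3) * 2 * g) := by
  have hbound : cramerBound g A ≤ cramerBound g a * N ^ (f * (2 * g + 3)) := by
    rw [cramerBound, cramerBound, mul_assoc _ (a ^ _), pow_mul, ← mul_pow]
    gcongr
  have hnonneg : 0 ≤ cramerBound g A := cramerBound_nonneg g hA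
  have hone : 1 ≤ N ^ (f * (2 * g + 3) * 2) := one_le_pow₀ hN
  rw [pow_mul N _ g, ← mul_pow]
  gcongr
  calc 2 * (2 * cramerBound g A) ^ 2 + 1
      ≤ 2 * (2 * (cramerBound g a * N ^ (f * (2 * g + 3)))) ^ 2 + N ^ (f * (2 * g + 3) * 2) := by
        gcongr
    _ = _ := by ring

theorem IsParabolicChain.exists_length_le_mul_pow (E : Type*) [NormedAddCommGroup E]
    [InnerProductSpace ℝ E] (g : ℕ) :
    ∃ c : ℝ, 0 ≤ c ∧ ∃ e : ℕ, ∀ {N : ℝ} {q : ℕ → E} {k : ℕ}, 1 ≤ N → IsParabolicChain N q k →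
      finrank ℝ (vectorSpan ℝ (q '' Set.Iic k)) ≤ g → k ≤ c * N ^ e := by
  induction g with
  | zero =>
    refine ⟨0, le_rfl, 0, fun _ h hfin ↦ ?_⟩
    simp [h.length_eq_zero_of_finrank_eq_zero (Nat.le_zero.1 hfin)]
  | succ g ih =>
    obtain ⟨c, hc, e, ih⟩ := ih
    let b : ℝ := (2 * (2 * cramerBound (g + 1) (c + 1)) ^ 2 + 1) ^ (g + 1)
    let f : ℕ := (e + 1) * (2 * (g + 1) + 3) * 2 * (g + 1)
    refine ⟨max (c + 1) b, by positivity, max e f, fun {N q k} hN h hfin ↦ ?_⟩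
    let L : ℕ := ⌊c * N ^ e⌋₊ + 1
    have hcL : c * N ^ e < L := by exact_mod_cast Nat.lt_floor_add_one (c * N ^ e)
    have hLc : (L : ℝ) ≤ (c + 1) * N ^ e := by
      have hfloor : (⌊c * N ^ e⌋₊ : ℝ) ≤ c * N ^ e := Nat.floor_le (by positivity)
      have hone : 1 ≤ N ^ e := one_le_pow₀ hN
      push_cast [L]
      linarith
    have hNL : 1 ≤ N * L := one_le_mul_of_one_le_of_one_le hN (by simp [L])
    rcases lt_or_ge k L with hkL | hLk
    · calc (k : ℝ) ≤ L := by exact_mod_cast hkL.le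
        _ ≤ (c + 1) * N ^ e := hLc
        _ ≤ max (c + 1) b * N ^ max e f := by
          gcongr
          exacts [le_max_left _ _, le_max_left _ _]
    have hwindow (a) (ha : a + L ≤ k) :
        g + 1 ≤ finrank ℝ (vectorSpan ℝ ((fun i ↦ q (a + i)) '' Set.Iic L)) := by
      by_contra! hlt
      exact hcL.not_ge (ih hN (h.shift ha) (Nat.le_of_lt_succ hlt))
    calc (k : ℝ) ≤ k + 1 := by linarith
      _ ≤ (2 * (2 * cramerBound (g + 1) (N * L)) ^ 2 + 1) ^ (g + 1) :=
        h.succ_length_le_of_le_finrank_windows hNL hLk hfin hwindow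
      _ ≤ b * N ^ f := cramerBound_count_le_mul_pow (g + 1) hN (zero_le_one.trans hNL) (by
          calc N * L ≤ N * ((c + 1) * N ^ e) := by gcongr
            _ = (c + 1) * N ^ (e + 1) := by ring)
      _ ≤ max (c + 1) b * N ^ max e f := by
        gcongr
        exacts [le_max_right _ _, le_max_right _ _]

end InnerProductSpace

section IntegerLattice

variable {d : ℕ}

/-- The inclusion of `ℤ^d` into Euclidean space. -/
def intToEuclidean (x : Fin d → ℤ) : EuclideanSpace ℝ (Fin d) :=
  WithLp.toLp 2 fun i ↦ (x i : ℝ)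

lemma intToEuclidean_injective : Function.Injective (intToEuclidean (d := d)) := by
  intro x y hxy
  ext i
  simpa [intToEuclidean] using congrArg (fun v ↦ v i) hxy

lemma isIntegralSet_range_intToEuclidean :
    IsIntegralSet (Set.range (intToEuclidean (d := d))) := by
  rintro _ ⟨x, rfl⟩ _ ⟨y, rfl⟩
  refine ⟨y ⬝ᵥ x, ?_⟩
  simp [intToEuclidean, EuclideanSpace.inner_toLp_toLp, dotProduct]

lemma eudistZ_eq_dist (x y : Fin d → ℤ) :
    eudistZ x y = dist (intToEuclidean x) (intToEuclidean y) := by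
  simp [eudistZ, intToEuclidean, EuclideanSpace.dist_eq, Real.dist_eq]

lemma norm_sq_intToEuclidean (x : Fin d → ℤ) :
    ‖intToEuclidean x‖ ^ 2 = ((∑ i, x i ^ 2 : ℤ) : ℝ) := by
  simp [intToEuclidean, EuclideanSpace.real_norm_sq_eq]

/-- The quantity `|x - y| + ||x|² - |y|²|`, which has to exceed `B` across different pieces. -/
def parabolicDist (x y : Fin d → ℤ) : ℝ :=
  eudistZ x y + |((∑ i, x i ^ 2 : ℤ) : ℝ) - ((∑ i, y i ^ 2 : ℤ) : ℝ)|

lemma parabolicDist_eq (x y : Fin d → ℤ) :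
    parabolicDist x y = dist (intToEuclidean x) (intToEuclidean y) +
      dist (‖intToEuclidean x‖ ^ 2) (‖intToEuclidean y‖ ^ 2) := by
  rw [parabolicDist, eudistZ_eq_dist, Real.dist_eq, norm_sq_intToEuclidean,
    norm_sq_intToEuclidean]

lemma parabolicDist_comm (x y : Fin d → ℤ) : parabolicDist x y = parabolicDist y x := by
  simp only [parabolicDist_eq, dist_comm]

-- `|x|² - |y|²` and `|x - y|²` have the same parity, so `|x - y|² + (|x|² - |y|²)²` is even.
lemma two_le_sq_parabolicDist {x y : Fin d → ℤ} (hxy : x ≠ y) : 2 ≤ parabolicDist x y ^ 2 := by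
  set n : ℤ := ∑ i, (x i - y i) ^ 2 with hn
  set m : ℤ := ∑ i, x i ^ 2 - ∑ i, y i ^ 2 with hm
  have hmn : m = n + 2 * ∑ i, (x i - y i) * y i := by
    rw [hm, hn, Finset.mul_sum, ← Finset.sum_sub_distrib, ← Finset.sum_add_distrib]
    exact Finset.sum_congr rfl fun i _ ↦ by ring
  have heven : Even (n + m ^ 2) := by
    rw [hmn]
    simp [parity_simps]
  have hpos : 0 < n := by
    obtain ⟨i, hi⟩ := Function.ne_iff.1 hxy
    exact Finset.sum_pos' (fun i _ ↦ sq_nonneg _)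
      ⟨i, Finset.mem_univ i, sq_pos_of_ne_zero (sub_ne_zero.2 hi)⟩
  have htwo : 2 ≤ n + m ^ 2 := by
    have := sq_nonneg m
    obtain ⟨r, hr⟩ := heven
    lia
  have hdist : eudistZ x y ^ 2 = n := by
    rw [eudistZ, Real.sq_sqrt (Finset.sum_nonneg fun i _ ↦ sq_nonneg _)]
    simp [hn]
  have hcross : 0 ≤ eudistZ x y * |(m : ℝ)| := mul_nonneg (Real.sqrt_nonneg _) (abs_nonneg _)
  calc (2 : ℝ) ≤ n + (m : ℝ) ^ 2 := by exact_mod_cast htwo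
    _ ≤ (eudistZ x y + |(m : ℝ)|) ^ 2 := by
      rw [add_sq, sq_abs, hdist]
      linarith
    _ = parabolicDist x y ^ 2 := by rw [parabolicDist, hm, Int.cast_sub]

/-- The graph on `ℤ^d` whose connected components form the partition for the threshold `B`. -/
def parabolicGraph (d : ℕ) (B : ℝ) : SimpleGraph (Fin d → ℤ) where
  Adj x y := x ≠ y ∧ parabolicDist x y ≤ B
  symm := ⟨fun x y h ↦ ⟨h.1.symm, parabolicDist_comm x y ▸ h.2⟩⟩
  loopless := ⟨fun _ h ↦ h.1 rfl⟩

variable {B : ℝ}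

lemma isParabolicChain_getVert {x y : Fin d → ℤ} {p : (parabolicGraph d B).Walk x y}
    (hp : p.IsPath) : IsParabolicChain B (fun i ↦ intToEuclidean (p.getVert i)) p.length where
  isIntegralSet := isIntegralSet_range_intToEuclidean.mono (by rintro _ ⟨i, -, rfl⟩; simp)
  dist_succ_le i hi := by
    have hstep := (p.adj_getVert_succ hi).2
    rw [parabolicDist_eq] at hstep
    exact (le_add_of_nonneg_right dist_nonneg).trans hstep
  dist_norm_sq_succ_le i hi := by
    have hstep := (p.adj_getVert_succ hi).2
    rw [parabolicDist_eq] at hstep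
    exact (le_add_of_nonneg_left dist_nonneg).trans hstep
  injOn := intToEuclidean_injective.comp_injOn hp.getVert_injOn

lemma exists_eudistZ_le_mul_pow_of_reachable (d : ℕ) :
    ∃ (c : ℝ) (e : ℕ), ∀ B : ℝ, 1 ≤ B → ∀ x y, (parabolicGraph d B).Reachable x y →
      eudistZ x y ≤ c * B ^ e := by
  obtain ⟨c, -, e, hlength⟩ :=
    IsParabolicChain.exists_length_le_mul_pow (EuclideanSpace ℝ (Fin d)) d
  refine ⟨c, e + 1, fun B hB x y hxy ↦ ?_⟩
  obtain ⟨p, hp⟩ := hxy.exists_isPath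
  have hchain := isParabolicChain_getVert hp
  have hpc : (p.length : ℝ) ≤ c * B ^ e :=
    hlength hB hchain ((Submodule.finrank_le _).trans (by simp))
  calc eudistZ x y = dist (intToEuclidean (p.getVert 0)) (intToEuclidean (p.getVert p.length)) := by
        rw [p.getVert_zero, p.getVert_length, eudistZ_eq_dist]
    _ ≤ B * p.length :=
      dist_le_mul_of_dist_succ_le hchain.dist_succ_le (Nat.zero_le _) le_rfl
    _ ≤ B * (c * B ^ e) := by gcongr
    _ = c * B ^ (e + 1) := by ring

lemma two_le_sq_of_reachable_of_ne {x y : Fin d → ℤ}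
    (hreach : (parabolicGraph d B).Reachable x y) (hxy : x ≠ y) : 2 ≤ B ^ 2 := by
  obtain ⟨p⟩ := hreach
  obtain ⟨hne, hle⟩ := p.adj_snd (SimpleGraph.Walk.not_nil_of_ne hxy)
  have hnonneg : 0 ≤ parabolicDist x p.snd := by
    rw [parabolicDist_eq]
    positivity
  exact (two_le_sq_parabolicDist hne).trans (pow_le_pow_left₀ hnonneg hle 2)

-- The constant `c` is absorbed into the exponent: either the component is a single point, or
-- `B ≥ √2`.
lemma exists_eudistZ_lt_pow_of_reachable (d : ℕ) :
    ∃ n : ℕ, 0 < n ∧ ∀ B : ℝ, 1 ≤ B → ∀ x y, (parabolicGraph d B).Reachable x y →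
      eudistZ x y < B ^ n := by
  obtain ⟨c, e, hdist⟩ := exists_eudistZ_le_mul_pow_of_reachable d
  obtain ⟨m, hm⟩ := pow_unbounded_of_one_lt c one_lt_two
  refine ⟨2 * m + e + 1, Nat.succ_pos _, fun B hB x y hreach ↦ ?_⟩
  obtain rfl | hxy := eq_or_ne x y
  · rw [eudistZ_eq_dist, dist_self]
    positivity
  have htwo : 2 ≤ B ^ 2 := two_le_sq_of_reachable_of_ne hreach hxy
  calc eudistZ x y ≤ c * B ^ e := hdist B hB x y hreach
    _ < 2 ^ m * B ^ e := by gcongr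
    _ ≤ (B ^ 2) ^ m * B ^ e := by gcongr
    _ = B ^ (2 * m + e) := by rw [← pow_mul, ← pow_add]
    _ ≤ B ^ (2 * m + e + 1) := pow_le_pow_right₀ hB (Nat.le_succ _)

lemma lt_parabolicDist_of_not_reachable {x y : Fin d → ℤ}
    (hxy : ¬ (parabolicGraph d B).Reachable x y) : B < parabolicDist x y := by
  by_contra! hle
  have hne : x ≠ y := fun heq ↦ hxy (heq ▸ SimpleGraph.Reachable.refl x)
  exact hxy (SimpleGraph.Adj.reachable ⟨hne, hle⟩)

end IntegerLattice

/-- Lemma 2.2 (arithmetic partition lemma): for every `B` there is a partition `{π_α}` of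
`ℤ^d` into pieces of diameter `< B^{C₀}` such that `|j - j'| + |j² - j'²| > B` whenever
`j`, `j'` lie in different pieces. -/
theorem statement4 (d : ℕ) (hd : 1 ≤ d) :
    ∃ C₀ : ℝ, 0 < C₀ ∧ ∀ B : ℝ, 1 ≤ B →
      ∃ PP : Set (Set (Fin d → ℤ)),
        (∀ π ∈ PP, π.Nonempty) ∧
        (∀ π ∈ PP, ∀ π' ∈ PP, π ≠ π' → π ∩ π' = ∅) ∧
        ⋃₀ PP = Set.univ ∧
        (∀ π ∈ PP, ∀ x ∈ π, ∀ y ∈ π, eudistZ x y < B ^ C₀) ∧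
        (∀ π ∈ PP, ∀ π' ∈ PP, π ≠ π' → ∀ x ∈ π, ∀ y ∈ π',
          B < eudistZ x y + |((∑ i, x i ^ 2 : ℤ) : ℝ) - ((∑ i, y i ^ 2 : ℤ) : ℝ)|) := by
  obtain ⟨n, hn, hdist⟩ := exists_eudistZ_lt_pow_of_reachable d
  refine ⟨n, by exact_mod_cast hn, fun B hB ↦ ?_⟩
  let r : Setoid (Fin d → ℤ) := (parabolicGraph d B).reachableSetoid
  have hpart : Setoid.IsPartition r.classes := r.isPartition_classes
  refine ⟨r.classes, fun π hπ ↦ Setoid.nonempty_of_mem_partition hpart hπ,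
    fun π hπ π' hπ' hne ↦ (hpart.pairwiseDisjoint hπ hπ' hne).inter_eq, hpart.sUnion_eq_univ,
    fun π hπ x hx y hy ↦ ?_, fun π hπ π' hπ' hne x hx y hy ↦ ?_⟩
  · rw [Real.rpow_natCast]
    exact hdist B hB x y (r.rel_iff_exists_classes.2 ⟨π, hπ, hx, hy⟩)
  · refine lt_parabolicDist_of_not_reachable fun hxy ↦ hne ?_
    obtain ⟨ρ, hρ, hxρ, hyρ⟩ := r.rel_iff_exists_classes.1 hxy
    exact (Setoid.eq_of_mem_classes hπ hx hρ hxρ).trans (Setoid.eq_of_mem_classes hρ hyρ hπ' hy)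

end NLS
end
end

section
/- For every d ≥ 1 there exist pairwise distinct nonzero vectors j_1, …, j_{d+2} ∈ ℤ^d such that the (d+2)×(d+2) matrix M — whose first row is (1, …, 1), whose rows 2 through d+1 are the coordinate rows (j_1(i), …, j_{d+2}(i)) for i = 1, …, d, and whose last row is (j_1², …, j_{d+2}²) — has det M ≠ 0. -/
open scoped BigOperators Pointwise
open MeasureTheory

noncomputable section

namespace NLS


/-- The `(d+2) × (d+2)` matrix with first row `(1,…,1)`, rows `2,…,d+1` the coordinate
rows of `j₁,…,j_{d+2}`, and last row the squared norms `(j₁²,…,j_{d+2}²)`. -/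
def Mmat (d : ℕ) (j : Fin (d + 2) → Fin d → ℤ) : Matrix (Fin (d + 2)) (Fin (d + 2)) ℤ :=
  Matrix.of fun r c =>
    if h0 : (r : ℕ) = 0 then 1
    else if hd : (r : ℕ) ≤ d then j c ⟨(r : ℕ) - 1, by omega⟩
    else ∑ i, j c i ^ 2

/-!
A vector in the left kernel of `M` is a polynomial `a + b · x + c |x|²` vanishing at every `j k`,
so `det M ≠ 0` says that the points lie on no common sphere or hyperplane. We take three points
on one coordinate axis and one point on each of the others. On the first axis the polynomial is a
quadratic with three distinct roots, so `a`, `c` and one entry of `b` vanish; each remaining point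
then kills one more entry of `b`.
-/

lemma quadratic_coeffs_eq_zero_of_three_roots {R : Type*} [CommRing R] [IsDomain R]
    {a b c r s t : R} (hrs : r ≠ s) (hrt : r ≠ t) (hst : s ≠ t)
    (hr : a + b * r + c * r ^ 2 = 0) (hs : a + b * s + c * s ^ 2 = 0)
    (ht : a + b * t + c * t ^ 2 = 0) : a = 0 ∧ b = 0 ∧ c = 0 := by
  have hinj : Function.Injective ![r, s, t] := by
    simp [Function.Injective, Fin.forall_fin_succ, hrs, hrt, hst, hrs.symm, hrt.symm, hst.symm]
  have hroots : ∀ k, ∑ i : Fin 3, ![a, b, c] i * ![r, s, t] k ^ (i : ℕ) = 0 := by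
    simp [Fin.forall_fin_succ, Fin.sum_univ_three, hr, hs, ht]
  simpa using Matrix.eq_zero_of_forall_index_sum_mul_pow_eq_zero hinj hroots

lemma cons_snoc_eq_zero_iff {R : Type*} [Zero R] {n : ℕ} {a : R} {b : Fin n → R} {c : R} :
    (Fin.cons a (Fin.snoc b c : Fin (n + 1) → R) : Fin (n + 2) → R) = 0 ↔
      a = 0 ∧ b = 0 ∧ c = 0 := by
  simp [funext_iff, Fin.forall_fin_succ (n := n + 1), Fin.forall_fin_succ' (n := n)]

lemma forall_iff_forall_cons_snoc {α : Type*} {n : ℕ} {P : (Fin (n + 2) → α) → Prop} :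
    (∀ v, P v) ↔ ∀ (a : α) (b : Fin n → α) (c : α),
      P (Fin.cons a (Fin.snoc b c : Fin (n + 1) → α)) := by
  rw [Fin.forall_fin_succ_pi]
  exact forall_congr' fun a => ⟨fun h b c => h (Fin.snoc b c), fun h w => Fin.snocCases (h · ·) w⟩

section Mmat

variable {d : ℕ} {j : Fin (d + 2) → Fin d → ℤ}

lemma vecMul_Mmat_cons_snoc (a : ℤ) (b : Fin d → ℤ) (c : ℤ) (k : Fin (d + 2)) :
    Matrix.vecMul (Fin.cons a (Fin.snoc b c : Fin (d + 1) → ℤ)) (Mmat d j) k =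
      a + b ⬝ᵥ j k + c * (j k ⬝ᵥ j k) := by
  simp [Matrix.vecMul, dotProduct, Fin.sum_univ_succ (n := d + 1), Fin.sum_univ_castSucc (n := d),
    Mmat, ← sq, add_assoc]

lemma det_Mmat_ne_zero_iff :
    (Mmat d j).det ≠ 0 ↔ ∀ (a : ℤ) (b : Fin d → ℤ) (c : ℤ),
      (∀ k, a + b ⬝ᵥ j k + c * (j k ⬝ᵥ j k) = 0) → a = 0 ∧ b = 0 ∧ c = 0 := by
  have hker : (Mmat d j).det ≠ 0 ↔ ∀ v, Matrix.vecMul v (Mmat d j) = 0 → v = 0 := by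
    simp only [ne_eq, ← Matrix.exists_vecMul_eq_zero_iff, not_exists, not_and', not_not]
  rw [hker, forall_iff_forall_cons_snoc]
  refine forall₃_congr fun a b c => ?_
  rw [cons_snoc_eq_zero_iff, funext_iff]
  simp only [vecMul_Mmat_cons_snoc, Pi.zero_apply]

lemma injective_of_det_Mmat_ne_zero (hdet : (Mmat d j).det ≠ 0) : Function.Injective j := by
  intro k l hkl
  by_contra hne
  exact hdet (Matrix.det_zero_of_column_eq hne fun r => by simp [Mmat, hkl])

end Mmat

/-- The witness configuration: the standard basis of `ℤ^d` followed by two further points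
`s e_z`, `t e_z` on the axis `z`. -/
def axisPoints {d : ℕ} (z : Fin d) (s t : ℤ) : Fin (d + 2) → Fin d → ℤ :=
  Fin.snoc (Fin.snoc (fun i => Pi.single i 1) (Pi.single z s) : Fin (d + 1) → Fin d → ℤ)
    (Pi.single z t)

section axisPoints

variable {d : ℕ} {z : Fin d} {s t : ℤ}

lemma forall_axisPoints {P : (Fin d → ℤ) → Prop} :
    (∀ k, P (axisPoints z s t k)) ↔
      (∀ i, P (Pi.single i 1)) ∧ P (Pi.single z s) ∧ P (Pi.single z t) := by
  simp [axisPoints, Fin.forall_fin_succ' (n := d + 1), Fin.forall_fin_succ' (n := d), and_assoc]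

lemma axisPoints_ne_zero (hs : s ≠ 0) (ht : t ≠ 0) (k : Fin (d + 2)) :
    axisPoints z s t k ≠ 0 := by
  revert k
  simp [forall_axisPoints (P := (· ≠ 0)), hs, ht]

lemma det_Mmat_axisPoints_ne_zero (hs : s ≠ 1) (ht : t ≠ 1) (hst : s ≠ t) :
    (Mmat d (axisPoints z s t)).det ≠ 0 := by
  rw [det_Mmat_ne_zero_iff]
  intro a b c hvanish
  obtain ⟨hbasis, hvs, hvt⟩ :=
    (forall_axisPoints (P := fun x => a + b ⬝ᵥ x + c * (x ⬝ᵥ x) = 0)).1 hvanish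
  simp only [dotProduct_single, Pi.single_eq_same, ← sq] at hbasis hvs hvt
  obtain ⟨rfl, -, rfl⟩ :=
    quadratic_coeffs_eq_zero_of_three_roots hs.symm ht.symm hst (hbasis z) hvs hvt
  exact ⟨rfl, funext fun i => by simpa using hbasis i, rfl⟩

end axisPoints

/-- For every `d ≥ 1` there are pairwise distinct nonzero `j₁,…,j_{d+2} ∈ ℤ^d` with
`det M ≠ 0`. -/
theorem statement11 (d : ℕ) (hd : 1 ≤ d) :
    ∃ j : Fin (d + 2) → Fin d → ℤ,
      Function.Injective j ∧ (∀ k, j k ≠ 0) ∧ (Mmat d j).det ≠ 0 := by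
  have hdet : (Mmat d (axisPoints ⟨0, hd⟩ (-1) 2)).det ≠ 0 :=
    det_Mmat_axisPoints_ne_zero (by decide) (by decide) (by decide)
  exact ⟨_, injective_of_det_Mmat_ne_zero hdet,
    axisPoints_ne_zero (by decide) (by decide), hdet⟩

end NLS
end
end

section
/- (Resonance identity, case (a).) Let j_1, …, j_b ∈ ℤ^d and ω⁰ = (j_1², …, j_b²) ∈ ℤ^b. Suppose (n, j), (n′, j′) ∈ ℤ^b × ℤ^d satisfy n·ω⁰ + j² = 0 and n′·ω⁰ + j′² = 0, and that for some k, k′ ∈ {1, …, b} one has n − n′ = −e_k + e_{k′} and j − j′ = j_k − j_{k′}. Then (j_k − j)·(j_k − j_{k′}) = 0. -/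
open scoped BigOperators Pointwise
open MeasureTheory

noncomputable section

namespace NLS

/-! Subtracting the two resonance relations gives `j² - j'² = j_k² - j_{k'}²`. As also
`j - j' = j_k - j_{k'}`, the points `j, j', j_{k'}, j_k` are the consecutive vertices of a
parallelogram. By polarization the defect in the relation between the squares is twice the inner
product of two adjacent sides, so the parallelogram is a rectangle. -/

open Matrix in
lemma dotProduct_sub_dotProduct_of_sub_eq_single {ι R : Type*} [Fintype ι] [DecidableEq ι]
    [NonAssocRing R] {n n' : ι → R} {k k' : ι}
    (hn : n - n' = -Pi.single k 1 + Pi.single k' 1) (ω : ι → R) :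
    n ⬝ᵥ ω - n' ⬝ᵥ ω = ω k' - ω k := by
  rw [← sub_dotProduct, hn, add_dotProduct, neg_dotProduct, single_one_dotProduct,
    single_one_dotProduct, neg_add_eq_sub]

section BilinForm

variable {R M : Type*} [CommRing R] [AddCommGroup M] [Module R M] {B : LinearMap.BilinForm R M}

lemma two_mul_bilin_sub_sub_of_sub_eq_sub (hB : B.IsSymm) {u v x y : M} (h : x - y = u - v) :
    2 * B (u - x) (u - v) = (B u u - B v v) - (B x x - B y y) := by
  obtain rfl : y = x - u + v := by rw [sub_add, ← h, sub_sub_cancel]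
  simp only [map_add, map_sub, LinearMap.add_apply, LinearMap.sub_apply,
    hB.eq x u, hB.eq v u, hB.eq v x]
  ring

theorem statement12_general {ι : Type*} [Fintype ι] [DecidableEq ι] (hR : IsLeftRegular (2 : R))
    (hB : B.IsSymm) {j : ι → M} {n n' : ι → R} {x x' : M} {k k' : ι}
    (hx : ∑ m, n m * B (j m) (j m) + B x x = 0)
    (hx' : ∑ m, n' m * B (j m) (j m) + B x' x' = 0)
    (hn : n - n' = -Pi.single k 1 + Pi.single k' 1) (hj : x - x' = j k - j k') :
    B (j k - x) (j k - j k') = 0 := by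
  have square_sub_square : B x x - B x' x' = B (j k) (j k) - B (j k') (j k') := by
    have frequency_sub := dotProduct_sub_dotProduct_of_sub_eq_single hn fun m ↦ B (j m) (j m)
    simp only [dotProduct] at frequency_sub
    linear_combination hx - hx' - frequency_sub
  refine hR.mul_left_eq_zero_iff.mp ?_
  rw [two_mul_bilin_sub_sub_of_sub_eq_sub hB hj, square_sub_square, sub_self]

end BilinForm

/-- Resonance identity (5.1), case (a): connectivity via the symbol `|u⁰|²`. -/
theorem statement12 (b d : ℕ) (j : Fin b → Fin d → ℤ) (n n' : Fin b → ℤ)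
    (jv jv' : Fin d → ℤ) (k k' : Fin b)
    (h1 : (∑ m, n m * ∑ i, j m i ^ 2) + ∑ i, jv i ^ 2 = 0)
    (h2 : (∑ m, n' m * ∑ i, j m i ^ 2) + ∑ i, jv' i ^ 2 = 0)
    (hn : n - n' = -Pi.single k 1 + Pi.single k' 1)
    (hj : jv - jv' = j k - j k') :
    ∑ i, (j k i - jv i) * (j k i - j k' i) = 0 := by
  simp only [sq] at h1 h2
  exact statement12_general (B := dotProductBilin ℤ ℤ) (IsRegular.of_ne_zero two_ne_zero).left
    ⟨dotProduct_comm⟩ h1 h2 hn hj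

end NLS
end
end

section
/- (Resonance identity, case (b).) Let j_1, …, j_b ∈ ℤ^d and ω⁰ = (j_1², …, j_b²) ∈ ℤ^b. Suppose (n, j), (n′, j′) ∈ ℤ^b × ℤ^d satisfy n·ω⁰ + j² = 0 and −n′·ω⁰ + j′² = 0, and that for some κ, κ′ ∈ {1, …, b} one has n′ − n = e_κ + e_{κ′} and j′ − j = −(j_κ + j_{κ′}). Then (j − j_κ)·(j − j_{κ′}) = 0. -/
open scoped BigOperators Pointwise
open MeasureTheory

noncomputable section

namespace NLS

theorem dotProduct_eq_add_of_sub_eq_single_add_single {R ι : Type*} [NonAssocRing R] [Fintype ι]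
    [DecidableEq ι] {n n' : ι → R} {κ κ' : ι}
    (hn : n' - n = Pi.single κ 1 + Pi.single κ' 1) (ω : ι → R) :
    n' ⬝ᵥ ω = n ⬝ᵥ ω + (ω κ + ω κ') := by
  rw [← sub_eq_iff_eq_add', ← sub_dotProduct, hn, add_dotProduct, single_one_dotProduct,
    single_one_dotProduct]

theorem isSymm_dotProductBilin (R ι : Type*) [CommSemiring R] [Fintype ι] :
    LinearMap.BilinForm.IsSymm (dotProductBilin R R : LinearMap.BilinForm R (ι → R)) :=
  ⟨dotProduct_comm⟩

theorem dotProductBilin_self {R ι : Type*} [CommSemiring R] [Fintype ι] (v : ι → R) :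
    dotProductBilin R R v v = ∑ i, v i ^ 2 := by
  simp only [dotProductBilin_apply_apply, dotProduct, sq]

section BilinForm

variable {R M : Type*} [CommRing R] [AddCommGroup M] [Module R M] {B : LinearMap.BilinForm R M}

/-- The points `v`, `x`, `x + y - v`, `y` are the consecutive vertices of a parallelogram, so the
vanishing of the right-hand side (the British flag relation) detects a right angle at `v`. -/
theorem two_mul_bilinForm_sub_sub (hB : B.IsSymm) (v x y : M) :
    2 * B (v - x) (v - y) = B v v + B (v - x - y) (v - x - y) - (B x x + B y y) := by
  simp only [map_sub, LinearMap.sub_apply, hB.eq x v, hB.eq y v, hB.eq y x]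
  ring

theorem statement13_general {ι : Type*} [Fintype ι] [DecidableEq ι]
    (two_regular : IsRegular (2 : R)) (hB : B.IsSymm) {j : ι → M} {n n' : ι → R} {v v' : M}
    {κ κ' : ι}
    (h : n ⬝ᵥ (fun m ↦ B (j m) (j m)) + B v v = 0)
    (h' : -(n' ⬝ᵥ fun m ↦ B (j m) (j m)) + B v' v' = 0)
    (hn : n' - n = Pi.single κ 1 + Pi.single κ' 1)
    (hv : v' - v = -(j κ + j κ')) :
    B (v - j κ) (v - j κ') = 0 := by
  have v'_eq : v' = v - j κ - j κ' := by
    rw [sub_eq_iff_eq_add.mp hv]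
    abel
  have weights_eq := dotProduct_eq_add_of_sub_eq_single_add_single hn fun m ↦ B (j m) (j m)
  have british_flag : B v v + B v' v' = B (j κ) (j κ) + B (j κ') (j κ') := by
    linear_combination h + h' + weights_eq
  rw [← two_regular.left.mul_left_eq_zero_iff, two_mul_bilinForm_sub_sub hB, ← v'_eq,
    british_flag, sub_self]

end BilinForm

/-- Resonance identity (5.2), case (b): connectivity via the symbol `(conj u⁰)²`. -/
theorem statement13 (b d : ℕ) (j : Fin b → Fin d → ℤ) (n n' : Fin b → ℤ)
    (jv jv' : Fin d → ℤ) (κ κ' : Fin b)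
    (h1 : (∑ m, n m * ∑ i, j m i ^ 2) + ∑ i, jv i ^ 2 = 0)
    (h2 : -(∑ m, n' m * ∑ i, j m i ^ 2) + ∑ i, jv' i ^ 2 = 0)
    (hn : n' - n = Pi.single κ 1 + Pi.single κ' 1)
    (hj : jv' - jv = -(j κ + j κ')) :
    ∑ i, (jv i - j κ i) * (jv i - j κ' i) = 0 := by
  simp only [← dotProductBilin_self] at h1 h2
  exact statement13_general (IsRegular.of_ne_zero two_ne_zero) (isSymm_dotProductBilin ℤ (Fin d))
    h1 h2 hn hj

end NLS
end
end

section
/- (1d cubic resonances are confined to the initial frequencies.) Let d = 1, let j_1, …, j_b be pairwise distinct nonzero integers, and let ω⁰ = (j_1², …, j_b²) ∈ ℤ^b. Suppose (n, j), (n′, j′) ∈ ℤ^b × ℤ satisfy one of the following: (a⁺) n·ω⁰ + j² = 0, n′·ω⁰ + j′² = 0, and (n − n′, j − j′) = (−e_k + e_{k′}, j_k − j_{k′}) for some k, k′ with j_k ≠ j_{k′}; (a⁻) −n·ω⁰ + j² = 0, −n′·ω⁰ + j′² = 0, and (n − n′, j − j′) = (−e_k + e_{k′}, j_k − j_{k′})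 for some k, k′ with j_k ≠ j_{k′}; (b) n·ω⁰ + j² = 0, −n′·ω⁰ + j′² = 0, and (n′ − n, j′ − j) = (e_κ + e_{κ′}, −(j_κ + j_{κ′})) for some κ, κ′. Then j ∈ {j_1, …, j_b} ∪ {−j_1, …, −j_b}. -/
open scoped BigOperators Pointwise
open MeasureTheory

noncomputable section

namespace NLS

/-!
Pairing the relation between `n` and `n'` with `ω⁰` turns each resonance condition into an equality
of the sums, and of the sums of squares, of two pairs of frequencies: `{jv, j k'}` and `{j k, jv'}`
in case (a⁺), `{jv, -j k}` and `{-j k', jv'}` in case (a⁻), `{jv, -jv'}` and `{j κ, j κ'}` in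
case (b). These two power sums determine an unordered pair, so the two pairs coincide; in
cases (a±) the alternative `jv = jv'` is excluded by `j k ≠ j k'`.
-/

section Resonance

theorem eq_or_eq_of_add_eq_add_of_sq_add_sq_eq {R : Type*} [CommRing R] [NoZeroDivisors R]
    [NeZero (2 : R)] {x y a c : R} (hadd : x + y = a + c) (hsq : x ^ 2 + y ^ 2 = a ^ 2 + c ^ 2) :
    x = a ∨ x = c := by
  have two_mul_prod : 2 * ((x - a) * (x - c)) = 0 := by
    linear_combination hsq + (x - y - a - c) * hadd
  have prod : (x - a) * (x - c) = 0 := (mul_eq_zero.mp two_mul_prod).resolve_left two_ne_zero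
  simpa only [mul_eq_zero, sub_eq_zero] using prod

variable {R ι : Type*} [Fintype ι] [DecidableEq ι] {n n' : ι → R} {k k' : ι}

theorem dotProduct_sub_of_sub_eq_neg_single_add_single [NonAssocRing R]
    (hn : n - n' = -Pi.single k 1 + Pi.single k' 1) (ω : ι → R) :
    n ⬝ᵥ ω - n' ⬝ᵥ ω = -ω k + ω k' := by
  rw [← sub_dotProduct, hn, add_dotProduct, neg_dotProduct, single_one_dotProduct,
    single_one_dotProduct]

theorem dotProduct_sub_of_sub_eq_single_add_single [NonAssocRing R]
    (hn : n' - n = Pi.single k 1 + Pi.single k' 1) (ω : ι → R) :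
    n' ⬝ᵥ ω - n ⬝ᵥ ω = ω k + ω k' := by
  rw [← sub_dotProduct, hn, add_dotProduct, single_one_dotProduct, single_one_dotProduct]

variable [CommRing R] [NoZeroDivisors R] [NeZero (2 : R)] {j : ι → R} {jv jv' : R}

theorem eq_of_pos_pos_resonance (h : n ⬝ᵥ j ^ 2 + jv ^ 2 = 0) (h' : n' ⬝ᵥ j ^ 2 + jv' ^ 2 = 0)
    (hne : j k ≠ j k') (hn : n - n' = -Pi.single k 1 + Pi.single k' 1)
    (hjv : jv - jv' = j k - j k') : jv = j k := by
  have hω : n ⬝ᵥ j ^ 2 - n' ⬝ᵥ j ^ 2 = -(j k ^ 2) + j k' ^ 2 :=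
    dotProduct_sub_of_sub_eq_neg_single_add_single hn (j ^ 2)
  have hadd : jv + j k' = j k + jv' := by linear_combination hjv
  have hsq : jv ^ 2 + j k' ^ 2 = j k ^ 2 + jv' ^ 2 := by linear_combination h - h' - hω
  refine (eq_or_eq_of_add_eq_add_of_sq_add_sq_eq hadd hsq).resolve_right fun hjv_eq ↦ hne ?_
  linear_combination hjv_eq - hjv

theorem eq_neg_of_neg_neg_resonance (h : -(n ⬝ᵥ j ^ 2) + jv ^ 2 = 0)
    (h' : -(n' ⬝ᵥ j ^ 2) + jv' ^ 2 = 0) (hne : j k ≠ j k')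
    (hn : n - n' = -Pi.single k 1 + Pi.single k' 1) (hjv : jv - jv' = j k - j k') :
    jv = -j k' := by
  have hω : n ⬝ᵥ j ^ 2 - n' ⬝ᵥ j ^ 2 = -(j k ^ 2) + j k' ^ 2 :=
    dotProduct_sub_of_sub_eq_neg_single_add_single hn (j ^ 2)
  have hadd : jv + -j k = -j k' + jv' := by linear_combination hjv
  have hsq : jv ^ 2 + (-j k) ^ 2 = (-j k') ^ 2 + jv' ^ 2 := by linear_combination h - h' + hω
  refine (eq_or_eq_of_add_eq_add_of_sq_add_sq_eq hadd hsq).resolve_right fun hjv_eq ↦ hne ?_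
  linear_combination hjv_eq - hjv

theorem eq_or_eq_of_pos_neg_resonance (h : n ⬝ᵥ j ^ 2 + jv ^ 2 = 0)
    (h' : -(n' ⬝ᵥ j ^ 2) + jv' ^ 2 = 0) (hn : n' - n = Pi.single k 1 + Pi.single k' 1)
    (hjv : jv' - jv = -(j k + j k')) : jv = j k ∨ jv = j k' := by
  have hω : n' ⬝ᵥ j ^ 2 - n ⬝ᵥ j ^ 2 = j k ^ 2 + j k' ^ 2 :=
    dotProduct_sub_of_sub_eq_single_add_single hn (j ^ 2)
  have hadd : jv + -jv' = j k + j k' := by linear_combination -hjv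
  have hsq : jv ^ 2 + (-jv') ^ 2 = j k ^ 2 + j k' ^ 2 := by linear_combination h + h' + hω
  exact eq_or_eq_of_add_eq_add_of_sq_add_sq_eq hadd hsq

theorem statement14_general
    (hcase :
      (n ⬝ᵥ j ^ 2 + jv ^ 2 = 0 ∧ n' ⬝ᵥ j ^ 2 + jv' ^ 2 = 0 ∧
        ∃ k k' : ι, j k ≠ j k' ∧
          n - n' = -Pi.single k 1 + Pi.single k' 1 ∧ jv - jv' = j k - j k') ∨
      (-(n ⬝ᵥ j ^ 2) + jv ^ 2 = 0 ∧ -(n' ⬝ᵥ j ^ 2) + jv' ^ 2 = 0 ∧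
        ∃ k k' : ι, j k ≠ j k' ∧
          n - n' = -Pi.single k 1 + Pi.single k' 1 ∧ jv - jv' = j k - j k') ∨
      (n ⬝ᵥ j ^ 2 + jv ^ 2 = 0 ∧ -(n' ⬝ᵥ j ^ 2) + jv' ^ 2 = 0 ∧
        ∃ κ κ' : ι,
          n' - n = Pi.single κ 1 + Pi.single κ' 1 ∧ jv' - jv = -(j κ + j κ'))) :
    ∃ m : ι, jv = j m ∨ jv = -j m := by
  rcases hcase with ⟨h, h', k, k', hne, hn, hjv⟩ | ⟨h, h', k, k', hne, hn, hjv⟩ |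
    ⟨h, h', κ, κ', hn, hjv⟩
  · exact ⟨k, .inl (eq_of_pos_pos_resonance h h' hne hn hjv)⟩
  · exact ⟨k', .inr (eq_neg_of_neg_neg_resonance h h' hne hn hjv)⟩
  · rcases eq_or_eq_of_pos_neg_resonance h h' hn hjv with hκ | hκ'
    · exact ⟨κ, .inl hκ⟩
    · exact ⟨κ', .inl hκ'⟩

end Resonance

/-- In `1d`, cubic resonances are confined to the initial frequencies `{± j_k}`. -/
theorem statement14 (b : ℕ) (j : Fin b → ℤ) (hj : Function.Injective j)
    (hj0 : ∀ k, j k ≠ 0) (n n' : Fin b → ℤ) (jv jv' : ℤ)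
    (hcase :
      ((∑ m, n m * j m ^ 2) + jv ^ 2 = 0 ∧ (∑ m, n' m * j m ^ 2) + jv' ^ 2 = 0 ∧
        ∃ k k' : Fin b, j k ≠ j k' ∧
          n - n' = -Pi.single k 1 + Pi.single k' 1 ∧ jv - jv' = j k - j k') ∨
      (-(∑ m, n m * j m ^ 2) + jv ^ 2 = 0 ∧ -(∑ m, n' m * j m ^ 2) + jv' ^ 2 = 0 ∧
        ∃ k k' : Fin b, j k ≠ j k' ∧
          n - n' = -Pi.single k 1 + Pi.single k' 1 ∧ jv - jv' = j k - j k') ∨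
      ((∑ m, n m * j m ^ 2) + jv ^ 2 = 0 ∧ -(∑ m, n' m * j m ^ 2) + jv' ^ 2 = 0 ∧
        ∃ κ κ' : Fin b,
          n' - n = Pi.single κ 1 + Pi.single κ' 1 ∧ jv' - jv = -(j κ + j κ'))) :
    ∃ m : Fin b, jv = j m ∨ jv = -j m :=
  statement14_general hcase

end NLS
end
end
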